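/- Let γ > 1 be a real number, let n₀, m₀ be coprime positive integers, and set α = γ^{−n₀}, β = γ^{−m₀}; assume 0 < α, β < 1/2 and τ(C_α)·τ(C_β) < 1. If 1/γ ≤ τ(C_α)·τ(C_β), then for every nonzero real λ: C_α − λ·C_β = [−λ, 1] if and only if λ belongs to ⋃_{n = −m₀+1}^{n₀} γⁿ·[ (1−2α)/(γβ), α/(1−2β) ], i.e., there exists an integer n with −m₀ + 1 ≤ n ≤ n₀ and γⁿ·(1−2α)/(γβ) ≤ λ ≤ γⁿ·α/(1−2β). -/

import Mathlib

/-!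
Reflecting `C_α` by `x ↦ 1 - x` turns the claim into: for `l > 0`, the sum `C_α + l · C_β` fills its
convex hull `[0, 1 + l]` iff `l` lies in the given union.

Sufficiency (`exists_approx`, `full_of_mem`). Consider `u · C_α + v · C_β` with
`v / u ∈ γⁿ · [(1 - 2α)/(γβ), α/(1 - 2β)]`. If `n ≤ 0`, then `v ≥ u (1 - 2α)`, so the hulls
of the two copies of `uα · C_α + v · C_β` cover `[0, u + v]`; the new ratio belongs to the index
`n + n₀`. If `n ≥ 1`, then `v (1 - 2β) ≤ u`, and splitting `C_β` instead moves the index to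
`n - m₀`. Both moves keep the index in `[-m₀ + 1, n₀]`, so the subdivision never stops. The
product `u v` contracts by at least `max α β` at each step while `u / v` stays bounded, hence
`C_α + l · C_β` is dense in `[0, 1 + l]`; being compact, it is everything.

Necessity. A point of `C_α` is at most `αⁱ⁺¹` or at least `αⁱ (1 - α)`, and similarly for `C_β`.
Hence if `l βʲ⁺¹ < αⁱ (1 - 2α)` and `αⁱ⁺¹ < l βʲ (1 - 2β)`, the sum misses the nonempty
interval between `αⁱ⁺¹ + l βʲ⁺¹` and `min (αⁱ (1 - α)) (l βʲ (1 - β))` (`no_gap`). By coprimality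
`αⁱ / βʲ` takes every value `γⁿ`, so `l` avoids all the open intervals
`γⁿ · (α/(1 - 2β), (1 - 2α)/β)`, and therefore lies in some `γⁿ · [(1 - 2α)/(γβ), α/(1 - 2β)]`.
The central gaps of `C_α` and `C_β` force `1 - 2α ≤ l` and `l (1 - 2β) ≤ 1`, which together with
the condition on the thicknesses bounds `n`.
-/

open Set MeasureTheory

/-- The middle Cantor set `C_a`, for `0 < a < 1/2`:
`C_a = { (1-a) * ∑ εₖ aᵏ : εₖ ∈ {0,1} }`. -/
noncomputable def middleCantor (a : ℝ) : Set ℝ :=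
  {x : ℝ | ∃ ε : ℕ → Bool, x = (1 - a) * ∑' k : ℕ, (if ε k then a ^ k else 0)}

/-- The arithmetic difference `C_a - l · C_b`. -/
noncomputable def diffSet (a b l : ℝ) : Set ℝ :=
  {z : ℝ | ∃ x ∈ middleCantor a, ∃ y ∈ middleCantor b, z = x - l * y}

/-! ### The middle Cantor set -/

lemma summable_digits {a : ℝ} (h0 : 0 < a) (h1 : a < 1 / 2) (ε : ℕ → Bool) :
    Summable (fun k : ℕ => if ε k then a ^ k else 0) := by
  refine Summable.of_nonneg_of_le (fun k => ?_) (fun k => ?_)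
    (summable_geometric_of_lt_one h0.le (by linarith : a < 1))
  · split_ifs <;> positivity
  · split_ifs
    · exact le_rfl
    · positivity

lemma zero_mem_cantor (a : ℝ) : (0 : ℝ) ∈ middleCantor a :=
  ⟨fun _ => false, by simp⟩

lemma one_sub_mem_cantor {a : ℝ} (h0 : 0 < a) (h1 : a < 1 / 2) {x : ℝ}
    (hx : x ∈ middleCantor a) : 1 - x ∈ middleCantor a := by
  obtain ⟨ε, rfl⟩ := hx
  refine ⟨fun k => !ε k, ?_⟩
  have hsum : (∑' k : ℕ, (if ε k then a ^ k else 0)) + ∑' k : ℕ, (if !ε k then a ^ k else 0)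
      = (1 - a)⁻¹ := by
    rw [← (summable_digits h0 h1 ε).tsum_add (summable_digits h0 h1 (fun k => !ε k)),
      ← tsum_geometric_of_lt_one h0.le (by linarith : a < 1)]
    congr 1
    ext k
    cases ε k <;> simp
  have hne : (1 - a) ≠ 0 := by linarith
  have := congrArg (fun t => (1 - a) * t) hsum
  simp only [mul_add, mul_inv_cancel₀ hne] at this
  linarith

lemma nonneg_of_mem_cantor {a : ℝ} (h0 : 0 < a) (h1 : a < 1 / 2) {x : ℝ}
    (hx : x ∈ middleCantor a) : 0 ≤ x := by
  obtain ⟨ε, rfl⟩ := hx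
  refine mul_nonneg (by linarith) (tsum_nonneg fun k => ?_)
  split_ifs <;> positivity

lemma le_one_of_mem_cantor {a : ℝ} (h0 : 0 < a) (h1 : a < 1 / 2) {x : ℝ}
    (hx : x ∈ middleCantor a) : x ≤ 1 := by
  linarith [nonneg_of_mem_cantor h0 h1 (one_sub_mem_cantor h0 h1 hx)]

/-- Splitting off the first digit of an expansion. -/
lemma tsum_digits {a : ℝ} (h0 : 0 < a) (h1 : a < 1 / 2) (ε : ℕ → Bool) :
    ∑' k : ℕ, (if ε k then a ^ k else 0)
      = (if ε 0 then 1 else 0) + a * ∑' k : ℕ, (if ε (k + 1) then a ^ k else 0) := by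
  rw [(summable_digits h0 h1 ε).tsum_eq_zero_add, ← tsum_mul_left]
  have h00 : (if ε 0 then a ^ 0 else 0) = (if ε 0 then (1 : ℝ) else 0) := by simp
  rw [h00]
  congr 1
  refine tsum_congr fun k => ?_
  split_ifs
  · ring
  · ring

lemma mul_mem_cantor {a : ℝ} (h0 : 0 < a) (h1 : a < 1 / 2) {x : ℝ}
    (hx : x ∈ middleCantor a) : a * x ∈ middleCantor a := by
  obtain ⟨ε, rfl⟩ := hx
  refine ⟨fun k => Nat.casesOn k false ε, ?_⟩
  rw [tsum_digits h0 h1 (fun k => Nat.casesOn k false ε)]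
  simp
  ring

lemma mul_add_mem_cantor {a : ℝ} (h0 : 0 < a) (h1 : a < 1 / 2) {x : ℝ}
    (hx : x ∈ middleCantor a) : a * x + (1 - a) ∈ middleCantor a := by
  obtain ⟨ε, rfl⟩ := hx
  refine ⟨fun k => Nat.casesOn k true ε, ?_⟩
  rw [tsum_digits h0 h1 (fun k => Nat.casesOn k true ε)]
  simp
  ring

lemma cantor_cases {a : ℝ} (h0 : 0 < a) (h1 : a < 1 / 2) {x : ℝ}
    (hx : x ∈ middleCantor a) :
    ∃ y ∈ middleCantor a, x = a * y ∨ x = a * y + (1 - a) := by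
  obtain ⟨ε, rfl⟩ := hx
  refine ⟨_, ⟨fun k => ε (k + 1), rfl⟩, ?_⟩
  rw [tsum_digits h0 h1]
  cases ε 0
  · left
    simp
    ring
  · right
    simp
    ring

/-- `C_a` avoids the open interval `(aⁱ⁺¹, aⁱ (1 - a))`, the gap of its leftmost piece of
level `i`. -/
lemma cantor_gap {a : ℝ} (h0 : 0 < a) (h1 : a < 1 / 2) (i : ℕ) :
    ∀ x ∈ middleCantor a, x ≤ a ^ (i + 1) ∨ a ^ i * (1 - a) ≤ x := by
  induction i with
  | zero =>
    intro x hx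
    obtain ⟨y, hy, rfl | rfl⟩ := cantor_cases h0 h1 hx
    · left
      have := le_one_of_mem_cantor h0 h1 hy
      rw [zero_add, pow_one]
      nlinarith
    · right
      have := nonneg_of_mem_cantor h0 h1 hy
      rw [pow_zero]
      nlinarith
  | succ i ih =>
    intro x hx
    obtain ⟨y, hy, rfl | rfl⟩ := cantor_cases h0 h1 hx
    · rcases ih y hy with h | h
      · left
        calc a * y ≤ a * a ^ (i + 1) := by gcongr
          _ = _ := by ring
      · right
        calc a ^ (i + 1) * (1 - a) = a * (a ^ i * (1 - a)) := by ring
          _ ≤ a * y := by gcongr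
    · right
      have := nonneg_of_mem_cantor h0 h1 hy
      have hp : a ^ (i + 1) ≤ 1 := pow_le_one₀ h0.le (by linarith)
      nlinarith [mul_nonneg h0.le this]

lemma isCompact_cantor {a : ℝ} (h0 : 0 < a) (h1 : a < 1 / 2) :
    IsCompact (middleCantor a) := by
  have hc : Continuous
      (fun ε : ℕ → Bool => (1 - a) * ∑' k : ℕ, (if ε k then a ^ k else 0)) := by
    refine continuous_const.mul (continuous_tsum (u := fun k => a ^ k) (fun k => ?_)
      (summable_geometric_of_lt_one h0.le (by linarith)) (fun k ε => ?_))
    · exact (continuous_of_discreteTopology (f := fun b : Bool => if b then a ^ k else 0)).comp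
        (continuous_apply k)
    · split_ifs
      · rw [Real.norm_of_nonneg (by positivity)]
      · rw [norm_zero]
        positivity
  have := isCompact_range hc
  convert this using 1
  ext x
  exact ⟨fun ⟨ε, h⟩ => ⟨ε, h.symm⟩, fun ⟨ε, h⟩ => ⟨ε, h.symm⟩⟩

/-! ### Reduction to sums -/

/-- `C_a + l · C_b` fills its convex hull `[0, 1 + l]`. -/
def FullSum (a b l : ℝ) : Prop :=
  ∀ z : ℝ, 0 ≤ z → z ≤ 1 + l → ∃ x ∈ middleCantor a, ∃ y ∈ middleCantor b, z = x + l * y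

lemma diffSet_eq_iff {a b l : ℝ} (ha0 : 0 < a) (ha : a < 1 / 2) (hb0 : 0 < b) (hb : b < 1 / 2)
    (hl : 0 < l) : diffSet a b l = Set.Icc (-l) 1 ↔ FullSum a b l := by
  constructor
  · intro h z hz0 hz1
    have hz : 1 - z ∈ diffSet a b l := by
      rw [h]
      constructor <;> linarith
    obtain ⟨x, hx, y, hy, hxy⟩ := hz
    exact ⟨1 - x, one_sub_mem_cantor ha0 ha hx, y, hy, by linarith⟩
  · intro h
    ext z
    constructor
    · rintro ⟨x, hx, y, hy, rfl⟩
      have hx0 := nonneg_of_mem_cantor ha0 ha hx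
      have hx1 := le_one_of_mem_cantor ha0 ha hx
      have hy0 := nonneg_of_mem_cantor hb0 hb hy
      have hy1 := le_one_of_mem_cantor hb0 hb hy
      constructor <;> nlinarith
    · rintro ⟨hz0, hz1⟩
      obtain ⟨x, hx, y, hy, hxy⟩ := h (1 - z) (by linarith) (by linarith)
      exact ⟨1 - x, one_sub_mem_cantor ha0 ha hx, y, hy, by linarith⟩

/-! ### Sufficiency -/

/-- The pair of sizes `(u, v)` is admissible: the ratio `v / u` lies in the union of intervals of the
theorem. -/
def Adm (γ : ℝ) (n₀ m₀ : ℕ) (α β u v : ℝ) : Prop :=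
  ∃ n : ℤ, -(m₀ : ℤ) + 1 ≤ n ∧ n ≤ (n₀ : ℤ) ∧
    γ ^ n * ((1 - 2 * α) / (γ * β)) * u ≤ v ∧ v ≤ γ ^ n * (α / (1 - 2 * β)) * u

section

variable {γ : ℝ} {n₀ m₀ : ℕ} {α β : ℝ}

/-- The lower end of the interval of index `n ≥ -m₀ + 1` is at least `1 - 2α`. -/
lemma left_bound (hγ : 1 < γ) (hβdef : β = γ ^ (-(m₀ : ℤ))) (hα : α < 1 / 2) {n : ℤ}
    (hn : -(m₀ : ℤ) + 1 ≤ n) : 1 - 2 * α ≤ γ ^ n * ((1 - 2 * α) / (γ * β)) := by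
  have hγ0 : 0 < γ := by linarith
  have hβ0 : 0 < β := hβdef ▸ zpow_pos hγ0 _
  have h1 : γ * β ≤ γ ^ n := by
    calc γ * β = γ ^ (-(m₀ : ℤ) + 1) := by rw [hβdef, zpow_add_one₀ hγ0.ne']; ring
      _ ≤ γ ^ n := zpow_le_zpow_right₀ hγ.le hn
  rw [← mul_div_assoc, le_div_iff₀ (by positivity), mul_comm]
  exact mul_le_mul_of_nonneg_right h1 (by linarith)

/-- The upper end of the interval of index `n ≤ n₀` is at most `1 / (1 - 2β)`. -/
lemma right_bound (hγ : 1 < γ) (hαdef : α = γ ^ (-(n₀ : ℤ))) (hβ : β < 1 / 2) {n : ℤ}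
    (hn : n ≤ (n₀ : ℤ)) : γ ^ n * (α / (1 - 2 * β)) ≤ 1 / (1 - 2 * β) := by
  have hγ0 : 0 < γ := by linarith
  have h1 : γ ^ n * α ≤ 1 := by
    rw [hαdef, ← zpow_add₀ hγ0.ne']
    exact zpow_le_one_of_nonpos₀ hγ.le (by linarith)
  rw [← mul_div_assoc]
  exact div_le_div_of_nonneg_right h1 (by linarith)

lemma Adm.lower (hγ : 1 < γ) (hβdef : β = γ ^ (-(m₀ : ℤ))) (hα : α < 1 / 2) {u v : ℝ}
    (hu : 0 < u) (h : Adm γ n₀ m₀ α β u v) : (1 - 2 * α) * u ≤ v := by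
  obtain ⟨n, h1, -, h3, -⟩ := h
  exact (mul_le_mul_of_nonneg_right (left_bound hγ hβdef hα h1) hu.le).trans h3

lemma Adm.upper (hγ : 1 < γ) (hαdef : α = γ ^ (-(n₀ : ℤ))) (hβ : β < 1 / 2) {u v : ℝ}
    (hu : 0 < u) (h : Adm γ n₀ m₀ α β u v) : v * (1 - 2 * β) ≤ u := by
  obtain ⟨n, -, h2, -, h4⟩ := h
  have := h4.trans (mul_le_mul_of_nonneg_right (right_bound hγ hαdef hβ h2) hu.le)
  rw [one_div_mul_eq_div, le_div_iff₀ (by linarith)] at this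
  exact this

/-- From an admissible pair, one of the two factors can be subdivided so that the pair stays
admissible. -/
lemma Adm.step (hγ : 1 < γ) (hαdef : α = γ ^ (-(n₀ : ℤ))) (hβdef : β = γ ^ (-(m₀ : ℤ)))
    {u v : ℝ} (h : Adm γ n₀ m₀ α β u v) :
    Adm γ n₀ m₀ α β (u * α) v ∨ Adm γ n₀ m₀ α β u (v * β) := by
  have hγ0 : 0 < γ := by linarith
  have hβ0 : 0 < β := hβdef ▸ zpow_pos hγ0 _
  obtain ⟨n, h1, h2, h3, h4⟩ := h
  rcases le_or_gt n 0 with hn | hn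
  · left
    have e : γ ^ (n + n₀) * α = γ ^ n := by
      rw [hαdef, ← zpow_add₀ hγ0.ne']
      congr 1
      ring
    refine ⟨n + n₀, by omega, by omega, ?_, ?_⟩
    · calc _ = (γ ^ (n + n₀) * α) * ((1 - 2 * α) / (γ * β)) * u := by ring
        _ ≤ v := by rw [e]; exact h3
    · calc v ≤ (γ ^ (n + n₀) * α) * (α / (1 - 2 * β)) * u := by rw [e]; exact h4
        _ = _ := by ring
  · right
    have e : γ ^ (n - m₀) = γ ^ n * β := by
      rw [hβdef, ← zpow_add₀ hγ0.ne']
      congr 1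
    refine ⟨n - m₀, by omega, by omega, ?_, ?_⟩
    · calc _ = (γ ^ n * ((1 - 2 * α) / (γ * β)) * u) * β := by rw [e]; ring
        _ ≤ v * β := by gcongr
    · calc v * β ≤ (γ ^ n * (α / (1 - 2 * β)) * u) * β := by gcongr
        _ = _ := by rw [e]; ring

/-- After `N` subdivisions, every point of `[0, u + v]` is approximated by `u · C_α + v · C_β`, with
squared error controlled by the product of the sizes of the current pieces. -/
lemma exists_approx (hγ : 1 < γ) (hαdef : α = γ ^ (-(n₀ : ℤ))) (hβdef : β = γ ^ (-(m₀ : ℤ)))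
    (hα : α < 1 / 2) (hβ : β < 1 / 2) (N : ℕ) :
    ∀ u v z : ℝ, 0 < u → 0 < v → Adm γ n₀ m₀ α β u v → 0 ≤ z → z ≤ u + v →
      ∃ x ∈ middleCantor α, ∃ y ∈ middleCantor β, (z - (u * x + v * y)) ^ 2 ≤
        (1 / (1 - 2 * α) + 2 + 1 / (1 - 2 * β)) * (1 / 2) ^ N * (u * v) := by
  have hγ0 : 0 < γ := by linarith
  have hα0 : 0 < α := hαdef ▸ zpow_pos hγ0 _
  have hβ0 : 0 < β := hβdef ▸ zpow_pos hγ0 _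
  have ha' : 0 < 1 - 2 * α := by linarith
  have hb' : 0 < 1 - 2 * β := by linarith
  induction N with
  | zero =>
    intro u v z hu hv hadm hz0 hz1
    refine ⟨0, zero_mem_cantor α, 0, zero_mem_cantor β, ?_⟩
    have hl := hadm.lower hγ hβdef hα hu
    have hr := hadm.upper hγ hαdef hβ hu
    have h1 : u * u ≤ 1 / (1 - 2 * α) * (u * v) := by
      rw [one_div_mul_eq_div, le_div_iff₀ ha']
      nlinarith
    have h2 : v * v ≤ 1 / (1 - 2 * β) * (u * v) := by
      rw [one_div_mul_eq_div, le_div_iff₀ hb']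
      nlinarith
    have h3 : z ^ 2 ≤ (u + v) ^ 2 := by gcongr
    rw [pow_zero]
    nlinarith
  | succ N ih =>
    intro u v z hu hv hadm hz0 hz1
    have hl := hadm.lower hγ hβdef hα hu
    have hr := hadm.upper hγ hαdef hβ hu
    set K := 1 / (1 - 2 * α) + 2 + 1 / (1 - 2 * β) with hK
    have hK0 : 0 < K := by positivity
    have key : ∀ t : ℝ, t ≤ 1 / 2 → K * (1 / 2) ^ N * (t * (u * v)) ≤
        K * (1 / 2) ^ (N + 1) * (u * v) := by
      intro t ht
      calc K * (1 / 2) ^ N * (t * (u * v)) ≤ K * (1 / 2) ^ N * (1 / 2 * (u * v)) := by gcongr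
        _ = _ := by ring
    rcases hadm.step hγ hαdef hβdef with hs | hs
    · rcases le_or_gt z (u * α + v) with hz | hz
      · obtain ⟨x, hx, y, hy, hxy⟩ := ih (u * α) v z (by positivity) hv hs hz0 hz
        refine ⟨_, mul_mem_cantor hα0 hα hx, y, hy, ?_⟩
        calc _ = (z - (u * α * x + v * y)) ^ 2 := by ring
          _ ≤ _ := hxy
          _ = K * (1 / 2) ^ N * (α * (u * v)) := by ring
          _ ≤ _ := key α hα.le
      · obtain ⟨x, hx, y, hy, hxy⟩ := ih (u * α) v (z - u * (1 - α)) (by positivity) hv hs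
          (by linarith) (by linarith)
        refine ⟨_, mul_add_mem_cantor hα0 hα hx, y, hy, ?_⟩
        calc _ = (z - u * (1 - α) - (u * α * x + v * y)) ^ 2 := by ring
          _ ≤ _ := hxy
          _ = K * (1 / 2) ^ N * (α * (u * v)) := by ring
          _ ≤ _ := key α hα.le
    · rcases le_or_gt z (u + v * β) with hz | hz
      · obtain ⟨x, hx, y, hy, hxy⟩ := ih u (v * β) z hu (by positivity) hs hz0 hz
        refine ⟨x, hx, _, mul_mem_cantor hβ0 hβ hy, ?_⟩
        calc _ = (z - (u * x + v * β * y)) ^ 2 := by ring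
          _ ≤ _ := hxy
          _ = K * (1 / 2) ^ N * (β * (u * v)) := by ring
          _ ≤ _ := key β hβ.le
      · obtain ⟨x, hx, y, hy, hxy⟩ := ih u (v * β) (z - v * (1 - β)) hu (by positivity) hs
          (by linarith) (by linarith)
        refine ⟨x, hx, _, mul_add_mem_cantor hβ0 hβ hy, ?_⟩
        calc _ = (z - v * (1 - β) - (u * x + v * β * y)) ^ 2 := by ring
          _ ≤ _ := hxy
          _ = K * (1 / 2) ^ N * (β * (u * v)) := by ring
          _ ≤ _ := key β hβ.le

lemma full_of_mem (hγ : 1 < γ) (hαdef : α = γ ^ (-(n₀ : ℤ))) (hβdef : β = γ ^ (-(m₀ : ℤ)))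
    (hα : α < 1 / 2) (hβ : β < 1 / 2) {l : ℝ} (hl : 0 < l) (h : Adm γ n₀ m₀ α β 1 l) :
    FullSum α β l := by
  have hγ0 : 0 < γ := by linarith
  have hα0 : 0 < α := hαdef ▸ zpow_pos hγ0 _
  have hβ0 : 0 < β := hβdef ▸ zpow_pos hγ0 _
  intro z hz0 hz1
  set D : Set ℝ := Set.image (fun p : ℝ × ℝ => p.1 + l * p.2) (middleCantor α ×ˢ middleCantor β)
    with hD
  have hDc : IsClosed D :=
    (((isCompact_cantor hα0 hα).prod (isCompact_cantor hβ0 hβ)).image (by fun_prop)).isClosed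
  have hz : z ∈ D := by
    rw [← hDc.closure_eq, Metric.mem_closure_iff]
    intro ε hε
    have hlim : Filter.Tendsto (fun N : ℕ =>
        (1 / (1 - 2 * α) + 2 + 1 / (1 - 2 * β)) * (1 / 2 : ℝ) ^ N * (1 * l))
        Filter.atTop (nhds 0) := by
      have := ((tendsto_pow_atTop_nhds_zero_of_lt_one (r := (1 / 2 : ℝ)) (by norm_num)
        (by norm_num)).const_mul (1 / (1 - 2 * α) + 2 + 1 / (1 - 2 * β))).mul_const (1 * l)
      simpa using this
    obtain ⟨N, hN⟩ := (hlim.eventually_lt_const (by positivity : (0 : ℝ) < ε ^ 2)).exists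
    obtain ⟨x, hx, y, hy, hxy⟩ :=
      exists_approx hγ hαdef hβdef hα hβ N 1 l z one_pos hl h hz0 hz1
    refine ⟨x + l * y, ⟨(x, y), ⟨hx, hy⟩, rfl⟩, ?_⟩
    rw [Real.dist_eq]
    rw [one_mul] at hxy
    exact abs_lt_of_sq_lt_sq (hxy.trans_lt hN) hε.le
  obtain ⟨⟨x, y⟩, ⟨hx, hy⟩, hxy⟩ := hz
  exact ⟨x, hx, y, hy, hxy.symm⟩

end

/-! ### Necessity -/

/-- The first gap of `aⁱ C_a + l bʲ C_b`, when there is one, survives in `C_a + l C_b`. -/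
lemma no_gap {a b l : ℝ} (ha0 : 0 < a) (ha : a < 1 / 2) (hb0 : 0 < b) (hb : b < 1 / 2)
    (hl : 0 < l) (h : FullSum a b l) (i j : ℕ) :
    ¬ (l * b ^ (j + 1) < a ^ i * (1 - 2 * a) ∧ a ^ (i + 1) < l * b ^ j * (1 - 2 * b)) := by
  rintro ⟨h1, h2⟩
  have e1 : a ^ (i + 1) + l * b ^ (j + 1) < a ^ i * (1 - a) := by
    rw [pow_succ a i]
    linarith
  have e2 : a ^ (i + 1) + l * b ^ (j + 1) < l * b ^ j * (1 - b) := by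
    rw [pow_succ b j]
    linarith
  obtain ⟨z, hz, hz'⟩ := exists_between (lt_min e1 e2)
  obtain ⟨hz1, hz2⟩ := lt_min_iff.1 hz'
  have hp : a ^ i ≤ 1 := pow_le_one₀ ha0.le (by linarith)
  have hzpos : 0 < z := lt_trans (by positivity) hz
  obtain ⟨x, hx, y, hy, rfl⟩ := h z hzpos.le (by nlinarith)
  have hx0 := nonneg_of_mem_cantor ha0 ha hx
  have hy0 := nonneg_of_mem_cantor hb0 hb hy
  have hly := mul_nonneg hl.le hy0
  rcases cantor_gap ha0 ha i x hx with hx' | hx'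
  · rcases cantor_gap hb0 hb j y hy with hy' | hy'
    · have := mul_le_mul_of_nonneg_left hy' hl.le
      linarith
    · have := mul_le_mul_of_nonneg_left hy' hl.le
      linarith
  · linarith

/-- Otherwise the central gap of `C_a` is not covered by the translates of `l · C_b`. -/
lemma one_sub_le_of_full {a b l : ℝ} (ha0 : 0 < a) (ha : a < 1 / 2) (hb0 : 0 < b)
    (hb : b < 1 / 2) (hl : 0 < l) (h : FullSum a b l) : 1 - 2 * a ≤ l := by
  by_contra! hc
  obtain ⟨z, hz1, hz2⟩ := exists_between (show a + l < 1 - a by linarith)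
  obtain ⟨x, hx, y, hy, rfl⟩ := h z (by linarith) (by linarith)
  have hy0 := mul_nonneg hl.le (nonneg_of_mem_cantor hb0 hb hy)
  have hy1 := mul_le_mul_of_nonneg_left (le_one_of_mem_cantor hb0 hb hy) hl.le
  rcases cantor_gap ha0 ha 0 x hx with hx' | hx'
  · simp only [zero_add, pow_one] at hx'
    linarith
  · simp only [pow_zero] at hx'
    linarith

/-- Otherwise the central gap of `l · C_b` is not covered by the translates of `C_a`. -/
lemma mul_le_one_of_full {a b l : ℝ} (ha0 : 0 < a) (ha : a < 1 / 2) (hb0 : 0 < b)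
    (hb : b < 1 / 2) (hl : 0 < l) (h : FullSum a b l) : l * (1 - 2 * b) ≤ 1 := by
  by_contra! hc
  obtain ⟨z, hz1, hz2⟩ := exists_between (show 1 + l * b < l * (1 - b) by linarith)
  have hlb : 0 < l * b := by positivity
  obtain ⟨x, hx, y, hy, rfl⟩ := h z (by linarith) (by linarith)
  have hx0 := nonneg_of_mem_cantor ha0 ha hx
  have hx1 := le_one_of_mem_cantor ha0 ha hx
  rcases cantor_gap hb0 hb 0 y hy with hy' | hy'
  · simp only [zero_add, pow_one] at hy'
    have := mul_le_mul_of_nonneg_left hy' hl.le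
    linarith
  · simp only [pow_zero, one_mul] at hy'
    have := mul_le_mul_of_nonneg_left hy' hl.le
    linarith

lemma exists_nat_comb {n₀ m₀ : ℕ} (hn₀ : 0 < n₀) (hm₀ : 0 < m₀) (hcop : Nat.Coprime n₀ m₀)
    (n : ℤ) : ∃ i j : ℕ, n = m₀ * j - n₀ * i := by
  obtain ⟨s, t, hst⟩ := Nat.isCoprime_iff_coprime.2 hcop
  -- a common large shift makes both Bézout coefficients nonnegative
  set k : ℤ := |n * s| + |n * t| with hk
  have hk0 : 0 ≤ k := by positivity
  have hi : 0 ≤ -(n * s) + m₀ * k := by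
    have : k ≤ m₀ * k := le_mul_of_one_le_left hk0 (by exact_mod_cast hm₀)
    linarith [le_abs_self (n * s), abs_nonneg (n * t)]
  have hj : 0 ≤ n * t + n₀ * k := by
    have : k ≤ n₀ * k := le_mul_of_one_le_left hk0 (by exact_mod_cast hn₀)
    linarith [neg_abs_le (n * t), abs_nonneg (n * s)]
  obtain ⟨i, hi'⟩ := Int.eq_ofNat_of_zero_le hi
  obtain ⟨j, hj'⟩ := Int.eq_ofNat_of_zero_le hj
  refine ⟨i, j, ?_⟩
  rw [← hi', ← hj']
  linear_combination (-n) * hst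

theorem stmt8 (γ : ℝ) (hγ : 1 < γ) (n₀ m₀ : ℕ) (hn₀ : 0 < n₀) (hm₀ : 0 < m₀)
    (hcop : Nat.Coprime n₀ m₀) (α β : ℝ)
    (hαdef : α = γ ^ (-(n₀ : ℤ))) (hβdef : β = γ ^ (-(m₀ : ℤ)))
    (hα0 : 0 < α) (hα : α < 1 / 2) (hβ0 : 0 < β) (hβ : β < 1 / 2)
    (hτ : (α / (1 - 2 * α)) * (β / (1 - 2 * β)) < 1)
    (hγτ : 1 / γ ≤ (α / (1 - 2 * α)) * (β / (1 - 2 * β)))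
    (l : ℝ) (hl : l ≠ 0) :
    diffSet α β l = Set.Icc (-l) 1 ↔
      ∃ n : ℤ, -(m₀ : ℤ) + 1 ≤ n ∧ n ≤ (n₀ : ℤ) ∧
        γ ^ n * ((1 - 2 * α) / (γ * β)) ≤ l ∧ l ≤ γ ^ n * (α / (1 - 2 * β)) := by
  have hγ0 : 0 < γ := by linarith
  have ha' : 0 < 1 - 2 * α := by linarith
  have hb' : 0 < 1 - 2 * β := by linarith
  have hτ' : α * β < (1 - 2 * α) * (1 - 2 * β) := by
    rwa [div_mul_div_comm, div_lt_one (by positivity)] at hτ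
  constructor
  · intro heq
    have hlpos : 0 < l := by
      -- `0` always belongs to the difference set, but not to `[-l, 1]` when `l < 0`
      have h0 : (0 : ℝ) ∈ diffSet α β l :=
        ⟨0, zero_mem_cantor α, 0, zero_mem_cantor β, by simp⟩
      rw [heq] at h0
      exact lt_of_le_of_ne (by linarith [h0.1]) hl.symm
    have hfull := (diffSet_eq_iff hα0 hα hβ0 hβ hlpos).1 heq
    have hlow := one_sub_le_of_full hα0 hα hβ0 hβ hlpos hfull
    have hupp := mul_le_one_of_full hα0 hα hβ0 hβ hlpos hfull
    obtain ⟨n, hn1, hn2⟩ :=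
      exists_mem_Ico_zpow (show 0 < l * (γ * β) / (1 - 2 * α) by positivity) hγ
    rw [le_div_iff₀ ha'] at hn1
    rw [zpow_add_one₀ hγ0.ne', div_lt_iff₀ ha'] at hn2
    have hlt : l * β < γ ^ n * (1 - 2 * α) := by
      refine lt_of_mul_lt_mul_left ?_ hγ0.le
      linarith
    have hle : l * (1 - 2 * β) ≤ γ ^ n * α := by
      by_contra! hc
      obtain ⟨i, j, hij⟩ := exists_nat_comb hn₀ hm₀ hcop n
      have hpow : γ ^ n * β ^ j = α ^ i := by
        rw [hαdef, hβdef, ← zpow_natCast, ← zpow_natCast, ← zpow_mul, ← zpow_mul,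
          ← zpow_add₀ hγ0.ne', hij]
        congr 1
        ring
      have hbj : 0 < β ^ j := by positivity
      refine no_gap hα0 hα hβ0 hβ hlpos hfull i j ⟨?_, ?_⟩
      · calc l * β ^ (j + 1) = l * β * β ^ j := by ring
          _ < γ ^ n * (1 - 2 * α) * β ^ j := by gcongr
          _ = γ ^ n * β ^ j * (1 - 2 * α) := by ring
          _ = _ := by rw [hpow]
      · calc α ^ (i + 1) = γ ^ n * β ^ j * α := by rw [hpow, pow_succ]
          _ = γ ^ n * α * β ^ j := by ring
          _ < l * (1 - 2 * β) * β ^ j := by gcongr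
          _ = _ := by ring
    refine ⟨n, ?_, ?_, ?_, ?_⟩
    · by_contra! hc
      have : γ ^ n ≤ β := by
        rw [hβdef]
        exact zpow_le_zpow_right₀ hγ.le (by omega)
      nlinarith
    · by_contra! hc
      have h1 : γ ≤ γ ^ n * α := by
        rw [hαdef, ← zpow_add₀ hγ0.ne']
        calc γ = γ ^ (1 : ℤ) := (zpow_one γ).symm
          _ ≤ _ := zpow_le_zpow_right₀ hγ.le (by omega)
      have h2 : γ * (1 - 2 * α) ≤ γ * (α * β * l) := by nlinarith
      have h3 : 1 - 2 * α ≤ α * β * l := le_of_mul_le_mul_left h2 hγ0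
      nlinarith
    · rw [← mul_div_assoc, div_le_iff₀ (by positivity)]
      exact hn1
    · rw [← mul_div_assoc, le_div_iff₀ hb']
      exact hle
  · rintro ⟨n, h1, h2, h3, h4⟩
    have hlpos : 0 < l := lt_of_lt_of_le (by positivity) h3
    exact (diffSet_eq_iff hα0 hα hβ0 hβ hlpos).2
      (full_of_mem hγ hαdef hβdef hα hβ hlpos ⟨n, h1, h2, by simpa using h3, by simpa using h4⟩)
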